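/- Let 1 ≤ m ≤ n, let V = ℝ^{m+n}, let L = diag(J_m, J_n), and let g be the nondegenerate symmetric bilinear form with matrix diag(ε₁S_m, ε₂S_n), ε₁, ε₂ ∈ {1, −1}. Then 𝔤_L consists precisely of the block matrices of the form [[0, M], [−ε₁ε₂·S_n·Mᵀ·S_m, 0]], where M ranges over the m×n matrices satisfying M_{i,l} = 0 whenever l − i < n − m and M_{i,l} = M_{i+1,l+1} whenever both entries are defined. Moreover, 𝔤_L is an abelian Lie algebra of dimension m. -/

import Mathlib

open Matrix

/-- The `n × n` real nilpotent Jordan block: `(J n) i j = 1` if `j = i + 1`, else `0`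
(0-based indices). -/
def JordanBlock (n : ℕ) : Matrix (Fin n) (Fin n) ℝ :=
  Matrix.of fun i j => if (j : ℕ) = (i : ℕ) + 1 then 1 else 0

/-- The `n × n` antidiagonal matrix `S n` with ones on the antidiagonal
(0-based: `(S n) i j = 1` iff `i + j + 1 = n`). -/
def AntiDiag (n : ℕ) : Matrix (Fin n) (Fin n) ℝ :=
  Matrix.of fun i j => if (i : ℕ) + (j : ℕ) + 1 = n then 1 else 0

lemma J_mul (m n : ℕ) (M : Matrix (Fin m) (Fin n) ℝ) (i : Fin m) (l : Fin n) :
    (JordanBlock m * M) i l = if h : (i : ℕ) + 1 < m then M ⟨i + 1, h⟩ l else 0 := by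
  rw [Matrix.mul_apply]
  split_ifs with h
  · rw [Finset.sum_eq_single ⟨(i : ℕ) + 1, h⟩]
    · simp [JordanBlock]
    · intro b _ hb
      have : (b : ℕ) ≠ i + 1 := fun e => hb (Fin.ext e)
      simp [JordanBlock, this]
    · simp
  · apply Finset.sum_eq_zero
    intro b _
    have : (b : ℕ) ≠ i + 1 := by have := b.2; omega
    simp [JordanBlock, this]

lemma mul_J (m n : ℕ) (M : Matrix (Fin m) (Fin n) ℝ) (i : Fin m) (l : Fin n) :
    (M * JordanBlock n) i l =
      if h : 0 < (l : ℕ) then M i ⟨l - 1, by have := l.2; omega⟩ else 0 := by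
  rw [Matrix.mul_apply]
  split_ifs with h
  · rw [Finset.sum_eq_single ⟨(l : ℕ) - 1, by have := l.2; omega⟩]
    · have : (l : ℕ) = l - 1 + 1 := by omega
      simp [JordanBlock, ← this]
    · intro b _ hb
      have : (l : ℕ) ≠ b + 1 := fun e => hb (Fin.ext (by simp; omega))
      simp [JordanBlock, this]
    · simp
  · apply Finset.sum_eq_zero
    intro b _
    have : (l : ℕ) ≠ b + 1 := by omega
    simp [JordanBlock, this]

lemma S_apply (n : ℕ) (i j : Fin n) : AntiDiag n i j = if j = i.rev then 1 else 0 := by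
  have : ((i : ℕ) + (j : ℕ) + 1 = n) ↔ j = i.rev := by
    rw [Fin.ext_iff, Fin.val_rev]; have := i.2; have := j.2; omega
  simp [AntiDiag, this]

lemma S_mul (m n : ℕ) (M : Matrix (Fin m) (Fin n) ℝ) (i : Fin m) (l : Fin n) :
    (AntiDiag m * M) i l = M i.rev l := by
  simp [Matrix.mul_apply, S_apply]

lemma mul_S (m n : ℕ) (M : Matrix (Fin m) (Fin n) ℝ) (i : Fin m) (l : Fin n) :
    (M * AntiDiag n) i l = M i l.rev := by
  have : ∀ j : Fin n, (l = j.rev) ↔ (j = l.rev) := fun j => by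
    constructor <;> (rintro rfl; simp)
  simp [Matrix.mul_apply, S_apply, this]

lemma S_S (n : ℕ) : AntiDiag n * AntiDiag n = 1 := by
  ext i j
  rw [S_mul, S_apply, Matrix.one_apply]
  simp [eq_comm]

lemma S_T (n : ℕ) : (AntiDiag n)ᵀ = AntiDiag n := by
  ext i j
  simp only [Matrix.transpose_apply, AntiDiag, Matrix.of_apply, add_comm (i : ℕ)]

lemma S_J (n : ℕ) : AntiDiag n * JordanBlock n = (JordanBlock n)ᵀ * AntiDiag n := by
  ext i j
  rw [S_mul, mul_S]
  have : ((j : ℕ) = (i.rev : ℕ) + 1) ↔ ((i : ℕ) = (j.rev : ℕ) + 1) := by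
    rw [Fin.val_rev, Fin.val_rev]; have := i.2; have := j.2; omega
  simp only [JordanBlock, Matrix.transpose_apply, Matrix.of_apply, this]

lemma J_S (n : ℕ) : JordanBlock n * AntiDiag n = AntiDiag n * (JordanBlock n)ᵀ := by
  calc JordanBlock n * AntiDiag n
      = AntiDiag n * (AntiDiag n * JordanBlock n) * AntiDiag n := by
        rw [← Matrix.mul_assoc, S_S, Matrix.one_mul]
    _ = AntiDiag n * (JordanBlock n)ᵀ := by
        rw [S_J, Matrix.mul_assoc, Matrix.mul_assoc, S_S, Matrix.mul_one]

/-- intertwiner characterisation -/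
lemma inter_iff (m n : ℕ) (hmn : m ≤ n) (M : Matrix (Fin m) (Fin n) ℝ) :
    M * JordanBlock n = JordanBlock m * M ↔
      ((∀ (i : Fin m) (l : Fin n),
            (l : ℤ) - (i : ℤ) < (n : ℤ) - (m : ℤ) → M i l = 0) ∧
          (∀ (i : Fin m) (l : Fin n) (hi : (i : ℕ) + 1 < m) (hl : (l : ℕ) + 1 < n),
            M i l = M ⟨(i : ℕ) + 1, hi⟩ ⟨(l : ℕ) + 1, hl⟩)) := by
  constructor
  · intro h
    have h' : ∀ i l, _ := fun i l => congrFun (congrFun h i) l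
    simp only [J_mul, mul_J] at h'
    have hT : (∀ (i : Fin m) (l : Fin n) (hi : (i : ℕ) + 1 < m) (hl : (l : ℕ) + 1 < n),
            M i l = M ⟨(i : ℕ) + 1, hi⟩ ⟨(l : ℕ) + 1, hl⟩) := by
      intro i l hi hl
      have := h' i ⟨l + 1, hl⟩
      simpa [hi] using this
    refine ⟨?_, hT⟩
    have key : ∀ (k : ℕ) (i : Fin m) (l : Fin n), (i : ℕ) + k + 1 = m →
        (l : ℤ) - (i : ℤ) < (n : ℤ) - (m : ℤ) → M i l = 0 := by
      intro k
      induction k with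
      | zero =>
        intro i l hi hl
        have := h' i ⟨l + 1, by omega⟩
        simpa [show ¬ ((i : ℕ) + 1 < m) by omega] using this
      | succ k ih =>
        intro i l hi hl
        rw [hT i l (by omega) (by omega)]
        exact ih _ _ (by simp; omega) (by simp; omega)
    intro i l hl
    exact key (m - 1 - i) i l (by omega) hl
  · rintro ⟨h0, hT⟩
    ext i l
    rw [J_mul, mul_J]
    have hi := i.2
    have hl := l.2
    split_ifs with h1 h2 h2
    · rw [hT i ⟨l - 1, by omega⟩ h2 (by simp; omega)]
      congr 2
      simp; omega
    · exact h0 _ _ (by simp; omega)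
    · exact (h0 _ _ (by simp; omega)).symm
    · rfl

lemma toep (m n : ℕ) (M : Matrix (Fin m) (Fin n) ℝ)
    (hT : ∀ (i : Fin m) (l : Fin n) (hi : (i : ℕ) + 1 < m) (hl : (l : ℕ) + 1 < n),
            M i l = M ⟨(i : ℕ) + 1, hi⟩ ⟨(l : ℕ) + 1, hl⟩)
    (k : ℕ) (i j : Fin m) (l p : Fin n) (hi : (j : ℕ) = i + k) (hl : (p : ℕ) = l + k) :
    M i l = M j p := by
  induction k generalizing i l with
  | zero =>
    rw [show j = i from Fin.ext hi, show p = l from Fin.ext hl]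
  | succ k ih =>
    rw [hT i l (by omega) (by omega)]
    exact ih _ _ (by simp; omega) (by simp; omega)

lemma persym (n : ℕ) (A : Matrix (Fin n) (Fin n) ℝ)
    (h : A * JordanBlock n = JordanBlock n * A) : AntiDiag n * Aᵀ * AntiDiag n = A := by
  obtain ⟨-, hT⟩ := (inter_iff n n le_rfl A).1 h
  ext i l
  rw [mul_S, S_mul, Matrix.transpose_apply]
  have hi := i.2
  have hl := l.2
  rcases Nat.le_total (i + l + 1) n with h | h
  · exact (toep n n A hT (n - (i + l + 1)) _ _ _ _ (by simp; omega) (by simp; omega)).symm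
  · exact (toep n n A hT ((i + l + 1) - n) _ _ _ _ (by simp; omega) (by simp; omega))

lemma adj_inter (m n : ℕ) (M : Matrix (Fin m) (Fin n) ℝ)
    (h : M * JordanBlock n = JordanBlock m * M) :
    (AntiDiag n * Mᵀ * AntiDiag m) * JordanBlock m
      = JordanBlock n * (AntiDiag n * Mᵀ * AntiDiag m) := by
  rw [Matrix.mul_assoc, S_J, Matrix.mul_assoc, ← Matrix.mul_assoc Mᵀ, ← Matrix.transpose_mul, ← h,
    Matrix.transpose_mul, Matrix.mul_assoc, ← Matrix.mul_assoc, ← J_S]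
  simp only [Matrix.mul_assoc]

lemma skew_iff {ι : Type*} [Fintype ι] [DecidableEq ι] (X G : Matrix ι ι ℝ) :
    (∀ u v, (X *ᵥ u) ⬝ᵥ (G *ᵥ v) = - u ⬝ᵥ (G *ᵥ (X *ᵥ v))) ↔ Xᵀ * G = - (G * X) := by
  have e : ∀ u v, (X *ᵥ u) ⬝ᵥ (G *ᵥ v) = u ⬝ᵥ ((Xᵀ * G) *ᵥ v) := by
    intro u v
    rw [← Matrix.mulVec_mulVec, Matrix.dotProduct_mulVec u, Matrix.vecMul_transpose]
  constructor
  · intro h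
    ext i j
    have := h (Pi.single i 1) (Pi.single j 1)
    rw [e, Matrix.mulVec_mulVec] at this
    simpa [Matrix.mulVec_single, single_dotProduct] using this
  · intro h u v
    rw [e, h, Matrix.mulVec_mulVec, Matrix.neg_mulVec]
    simp

def Tm (m n : ℕ) (c : Fin m → ℝ) : Matrix (Fin m) (Fin n) ℝ :=
  Matrix.of fun i l => if h : (i : ℕ) + (n - m) ≤ l ∧ m ≤ n then
    c ⟨l - i - (n - m), by have := i.2; have := l.2; omega⟩ else 0

noncomputable def Phi (m n : ℕ) (e : ℝ) :
    (Fin m → ℝ) →ₗ[ℝ] Matrix (Fin m ⊕ Fin n) (Fin m ⊕ Fin n) ℝ where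
  toFun c := Matrix.fromBlocks 0 (Tm m n c) (e • (AntiDiag n * (Tm m n c)ᵀ * AntiDiag m)) 0
  map_add' c d := by
    have : Tm m n (c + d) = Tm m n c + Tm m n d := by
      ext i l; simp only [Tm, Matrix.of_apply, Matrix.add_apply]; split_ifs <;> simp
    rw [this, Matrix.fromBlocks_add]
    simp [Matrix.mul_add, Matrix.add_mul]
  map_smul' r c := by
    have : Tm m n (r • c) = r • Tm m n c := by
      ext i l; simp only [Tm, Matrix.of_apply, Matrix.smul_apply]; split_ifs <;> simp
    rw [this, RingHom.id_apply, Matrix.fromBlocks_smul]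
    simp [smul_comm r e]

/-- For `1 ≤ m ≤ n`, `L = diag(J_m, J_n)` and `g` with matrix
`G = diag(ε₁ S_m, ε₂ S_n)`, `ε₁, ε₂ ∈ {1, -1}`, the algebra `𝔤_L` consists precisely of
the block matrices `[[0, M], [-ε₁ε₂·S_n Mᵀ S_m, 0]]`, where `M` runs over `m × n`
matrices vanishing below the `(n-m)`-th diagonal and constant along diagonals.
Moreover, `𝔤_L` is an abelian Lie algebra of dimension `m`. -/
theorem stmt11 (m n : ℕ) (hm : 1 ≤ m) (hmn : m ≤ n) (ε₁ ε₂ : ℝ)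
    (hε₁ : ε₁ = 1 ∨ ε₁ = -1) (hε₂ : ε₂ = 1 ∨ ε₂ = -1)
    (L G : Matrix (Fin m ⊕ Fin n) (Fin m ⊕ Fin n) ℝ)
    (hLdef : L = Matrix.fromBlocks (JordanBlock m) 0 0 (JordanBlock n))
    (hGdef : G = Matrix.fromBlocks (ε₁ • AntiDiag m) 0 0 (ε₂ • AntiDiag n)) :
    ({X : Matrix (Fin m ⊕ Fin n) (Fin m ⊕ Fin n) ℝ |
        (∀ u v, (X *ᵥ u) ⬝ᵥ (G *ᵥ v) = - u ⬝ᵥ (G *ᵥ (X *ᵥ v))) ∧ X * L = L * X} =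
      {X : Matrix (Fin m ⊕ Fin n) (Fin m ⊕ Fin n) ℝ |
        ∃ M : Matrix (Fin m) (Fin n) ℝ,
          (∀ (i : Fin m) (l : Fin n),
            (l : ℤ) - (i : ℤ) < (n : ℤ) - (m : ℤ) → M i l = 0) ∧
          (∀ (i : Fin m) (l : Fin n) (hi : (i : ℕ) + 1 < m) (hl : (l : ℕ) + 1 < n),
            M i l = M ⟨(i : ℕ) + 1, hi⟩ ⟨(l : ℕ) + 1, hl⟩) ∧
          X = Matrix.fromBlocks 0 M
                ((-(ε₁ * ε₂)) • (AntiDiag n * Mᵀ * AntiDiag m)) 0}) ∧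
    -- `𝔤_L` is abelian
    (∀ X Y : Matrix (Fin m ⊕ Fin n) (Fin m ⊕ Fin n) ℝ,
      X ∈ {X : Matrix (Fin m ⊕ Fin n) (Fin m ⊕ Fin n) ℝ |
        (∀ u v, (X *ᵥ u) ⬝ᵥ (G *ᵥ v) = - u ⬝ᵥ (G *ᵥ (X *ᵥ v))) ∧ X * L = L * X} →
      Y ∈ {X : Matrix (Fin m ⊕ Fin n) (Fin m ⊕ Fin n) ℝ |
        (∀ u v, (X *ᵥ u) ⬝ᵥ (G *ᵥ v) = - u ⬝ᵥ (G *ᵥ (X *ᵥ v))) ∧ X * L = L * X} →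
      X * Y = Y * X) ∧
    -- of dimension `m`
    Module.finrank ℝ (Submodule.span ℝ
        {X : Matrix (Fin m ⊕ Fin n) (Fin m ⊕ Fin n) ℝ |
          (∀ u v, (X *ᵥ u) ⬝ᵥ (G *ᵥ v) = - u ⬝ᵥ (G *ᵥ (X *ᵥ v))) ∧ X * L = L * X}) = m := by
  have h11 : ε₁ * ε₁ = 1 := by rcases hε₁ with h | h <;> simp [h]
  have h22 : ε₂ * ε₂ = 1 := by rcases hε₂ with h | h <;> simp [h]
  have part1 : ({X : Matrix (Fin m ⊕ Fin n) (Fin m ⊕ Fin n) ℝ |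
        (∀ u v, (X *ᵥ u) ⬝ᵥ (G *ᵥ v) = - u ⬝ᵥ (G *ᵥ (X *ᵥ v))) ∧ X * L = L * X} =
      {X : Matrix (Fin m ⊕ Fin n) (Fin m ⊕ Fin n) ℝ |
        ∃ M : Matrix (Fin m) (Fin n) ℝ,
          (∀ (i : Fin m) (l : Fin n),
            (l : ℤ) - (i : ℤ) < (n : ℤ) - (m : ℤ) → M i l = 0) ∧
          (∀ (i : Fin m) (l : Fin n) (hi : (i : ℕ) + 1 < m) (hl : (l : ℕ) + 1 < n),
            M i l = M ⟨(i : ℕ) + 1, hi⟩ ⟨(l : ℕ) + 1, hl⟩) ∧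
          X = Matrix.fromBlocks 0 M
                ((-(ε₁ * ε₂)) • (AntiDiag n * Mᵀ * AntiDiag m)) 0}) := by
    ext X
    simp only [Set.mem_ofPred_eq, skew_iff]
    constructor
    · rintro ⟨hs, hc⟩
      obtain ⟨A, B, C, D, rfl⟩ : ∃ A B C D, X = Matrix.fromBlocks A B C D :=
        ⟨_, _, _, _, (Matrix.fromBlocks_toBlocks X).symm⟩
      rw [hLdef, Matrix.fromBlocks_multiply, Matrix.fromBlocks_multiply,
        Matrix.fromBlocks_inj] at hc
      rw [hGdef, Matrix.fromBlocks_transpose, Matrix.fromBlocks_multiply,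
        Matrix.fromBlocks_multiply, Matrix.fromBlocks_neg, Matrix.fromBlocks_inj] at hs
      simp only [Matrix.mul_zero, Matrix.zero_mul, add_zero, zero_add] at hc hs
      obtain ⟨cA, cB, cC, cD⟩ := hc
      obtain ⟨sA, sB, sC, sD⟩ := hs
      have zero : ∀ (k : ℕ) (ε : ℝ) (A : Matrix (Fin k) (Fin k) ℝ), ε * ε = 1 →
          A * JordanBlock k = JordanBlock k * A →
          Aᵀ * (ε • AntiDiag k) = -((ε • AntiDiag k) * A) → A = 0 := by
        intro k ε A he h1 h2
        have p := persym k A h1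
        have := congrArg (fun Z => ε • (AntiDiag k * Z)) h2
        simp only [Matrix.mul_smul, Matrix.smul_mul, smul_smul, Matrix.mul_neg, smul_neg,
          ← Matrix.mul_assoc, S_S, he, p, one_smul, Matrix.one_mul] at this
        ext i j
        have h := congrFun (congrFun this i) j
        rw [Matrix.neg_apply] at h
        rw [Matrix.zero_apply]
        linarith
      have hA := zero m ε₁ A h11 cA sA
      have hD := zero n ε₂ D h22 cD sD
      have hC : C = (-(ε₁ * ε₂)) • (AntiDiag n * Bᵀ * AntiDiag m) := by
        have := congrArg (fun Z => ε₂ • (AntiDiag n * Z)) sC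
        simp only [Matrix.mul_smul, Matrix.smul_mul, smul_smul, Matrix.mul_neg, smul_neg,
          ← Matrix.mul_assoc, S_S, h22, one_smul, Matrix.one_mul] at this
        rw [neg_smul, mul_comm ε₁, this, neg_neg]
      obtain ⟨b1, b2⟩ := (inter_iff m n hmn B).1 cB
      exact ⟨B, b1, b2, by rw [hA, hD, ← hC]⟩
    · rintro ⟨M, h0, hT, rfl⟩
      have hM := (inter_iff m n hmn M).2 ⟨h0, hT⟩
      have hM' := adj_inter m n M hM
      constructor
      · rw [hGdef, Matrix.fromBlocks_transpose, Matrix.fromBlocks_multiply,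
          Matrix.fromBlocks_multiply, Matrix.fromBlocks_neg, Matrix.fromBlocks_inj]
        refine ⟨by simp, ?_, ?_, by simp⟩
        · simp only [Matrix.transpose_smul, Matrix.transpose_mul, Matrix.transpose_transpose, S_T,
            Matrix.mul_zero, Matrix.zero_mul, add_zero, zero_add, Matrix.mul_smul,
            Matrix.smul_mul, smul_smul, Matrix.mul_assoc, S_S, Matrix.mul_one]
          rw [← neg_smul]
          congr 1
          linear_combination (-ε₁) * h22
        · simp only [Matrix.mul_zero, Matrix.zero_mul, add_zero, zero_add, Matrix.mul_smul,
            Matrix.smul_mul, smul_smul, ← Matrix.mul_assoc, S_S, Matrix.one_mul]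
          rw [← neg_smul]
          congr 1
          linear_combination (-ε₁) * h22
      · rw [hLdef, Matrix.fromBlocks_multiply, Matrix.fromBlocks_multiply,
          Matrix.fromBlocks_inj]
        refine ⟨by simp, by simpa using hM, ?_, by simp⟩
        simp only [Matrix.mul_zero, Matrix.zero_mul, add_zero, zero_add, Matrix.mul_smul,
          Matrix.smul_mul, hM']
  refine ⟨part1, ?_, ?_⟩
  · rw [part1]
    rintro X Y ⟨M, h0, hT, rfl⟩ ⟨N, k0, kT, rfl⟩
    have hM := (inter_iff m n hmn M).2 ⟨h0, hT⟩
    have hM' := adj_inter m n M hM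
    have hN := (inter_iff m n hmn N).2 ⟨k0, kT⟩
    have hN' := adj_inter m n N hN
    rw [Matrix.fromBlocks_multiply, Matrix.fromBlocks_multiply, Matrix.fromBlocks_inj]
    refine ⟨?_, by simp, by simp, ?_⟩
    · have p := persym m (M * (AntiDiag n * Nᵀ * AntiDiag m)) (by
        rw [Matrix.mul_assoc, hN', ← Matrix.mul_assoc, hM, Matrix.mul_assoc])
      simp only [Matrix.mul_zero, zero_add, Matrix.mul_smul]
      congr 1
      rw [← p]
      simp only [Matrix.transpose_mul, Matrix.transpose_transpose, S_T, ← Matrix.mul_assoc, S_S,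
        Matrix.one_mul]
    · have p := persym n ((AntiDiag n * Mᵀ * AntiDiag m) * N) (by
        rw [Matrix.mul_assoc, hN, ← Matrix.mul_assoc, hM', Matrix.mul_assoc])
      simp only [Matrix.mul_zero, add_zero, Matrix.smul_mul]
      congr 1
      rw [← p]
      simp only [Matrix.transpose_mul, Matrix.transpose_transpose, S_T, Matrix.mul_assoc, S_S,
        Matrix.mul_one]
  · have hr : {X : Matrix (Fin m ⊕ Fin n) (Fin m ⊕ Fin n) ℝ |
        (∀ u v, (X *ᵥ u) ⬝ᵥ (G *ᵥ v) = - u ⬝ᵥ (G *ᵥ (X *ᵥ v))) ∧ X * L = L * X}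
        = (LinearMap.range (Phi m n (-(ε₁ * ε₂))) : Set _) := by
      rw [part1]
      ext X
      simp only [Set.mem_ofPred_eq, SetLike.mem_coe, LinearMap.mem_range]
      constructor
      · rintro ⟨M, h0, hT, rfl⟩
        refine ⟨fun k => M ⟨0, hm⟩ ⟨k + (n - m), by have := k.2; omega⟩, ?_⟩
        have : Tm m n (fun k => M ⟨0, hm⟩ ⟨k + (n - m), by have := k.2; omega⟩) = M := by
          ext i l
          simp only [Tm, Matrix.of_apply]
          split_ifs with h
          · exact toep m n M hT i _ _ _ _ (by simp) (by simp; omega)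
          · exact (h0 _ _ (by omega)).symm
        simp only [Phi, LinearMap.coe_mk, AddHom.coe_mk, this]
      · rintro ⟨c, rfl⟩
        refine ⟨Tm m n c, ?_, ?_, rfl⟩
        · intro i l h
          simp only [Tm, Matrix.of_apply]
          rw [dif_neg (by omega)]
        · intro i l hi hl
          simp only [Tm, Matrix.of_apply]
          by_cases h : (i : ℕ) + (n - m) ≤ l ∧ m ≤ n
          · rw [dif_pos h, dif_pos (by omega)]
            congr 2
            omega
          · rw [dif_neg h, dif_neg (by omega)]
    rw [hr, Submodule.span_eq, LinearMap.finrank_range_of_inj]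
    · simp
    · intro c d h
      have h' : Tm m n c = Tm m n d := (Matrix.fromBlocks_inj.1 h).2.1
      ext k
      have := congrFun (congrFun h' ⟨0, hm⟩) ⟨k + (n - m), by have := k.2; omega⟩
      simpa [Tm, hmn] using this
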